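/- If A and B are nonempty Abelian heaps and (C, ι_A, ι_B) is a coproduct of A and B in the category of Abelian heaps, then the underlying set of C is infinite. -/

import Mathlib

/-- A ternary operation is a heap operation if it is associative and
satisfies the Mal'cev identities. -/
def IsHeap {H : Type*} (op : H → H → H → H) : Prop :=
  (∀ a b c d e : H, op (op a b c) d e = op a b (op c d e)) ∧
  (∀ a b : H, op a b b = a) ∧ (∀ a b : H, op b b a = a)

/-- An Abelian heap is a heap whose ternary operation satisfies
`[a,b,c] = [c,b,a]`. -/
def IsAbelianHeap {H : Type*} (op : H → H → H → H) : Prop :=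
  IsHeap op ∧ ∀ a b c : H, op a b c = op c b a

/-!
The integers with the operation `x - y + z` form an Abelian heap. The universal property of `C`
yields a morphism `ξ : C → ℤ` that is constantly `0` on the image of `A` and constantly `1` on the
image of `B`. For `p` in the image of `A` and `q` in that of `B`, the translation `x ↦ [x, p, q]`
of `C` then lies over the successor map of `ℤ`, so the orbit of any point under it is infinite.
-/

universe u

/-- Heap morphisms, defined for maps between sets with arbitrary ternary operations. -/
def IsHeapHom {H K : Type*} (opH : H → H → H → H) (opK : K → K → K → K) (f : H → K) : Prop :=
  ∀ x y z : H, f (opH x y z) = opK (f x) (f y) (f z)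

theorem isHeapHom_const {H K : Type*} (opH : H → H → H → H) {opK : K → K → K → K} {k : K}
    (hk : opK k k k = k) : IsHeapHom opH opK (fun _ => k) :=
  fun _ _ _ => hk.symm

/-- The ternary operation that turns an additive group into a heap. -/
def groupHeapOp {G : Type*} [AddGroup G] (x y z : G) : G := x - y + z

theorem isHeap_groupHeapOp (G : Type*) [AddGroup G] : IsHeap (groupHeapOp (G := G)) :=
  ⟨fun a b c d e => by simp only [groupHeapOp, sub_eq_add_neg, add_assoc],
    fun a b => sub_add_cancel a b, fun a b => by rw [groupHeapOp, sub_self, zero_add]⟩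

theorem isAbelianHeap_groupHeapOp (G : Type*) [AddCommGroup G] :
    IsAbelianHeap (groupHeapOp (G := G)) :=
  ⟨isHeap_groupHeapOp G, fun a b c => by simp only [groupHeapOp]; abel⟩

section AddGroup

variable {C G : Type*} [AddGroup G] {opC : C → C → C → C} {ξ : C → G}

theorem IsHeapHom.map_iterate_translation (hξ : IsHeapHom opC groupHeapOp ξ) (p q r : C) (n : ℕ) :
    ξ ((fun x => opC x p q)^[n] r) = ξ r + n • (-ξ p + ξ q) := by
  induction n with
  | zero => rw [Function.iterate_zero_apply, zero_nsmul, add_zero]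
  | succ n ih =>
    rw [Function.iterate_succ_apply', hξ, ih, groupHeapOp, succ_nsmul, sub_eq_add_neg, add_assoc,
      add_assoc]

theorem IsHeapHom.infinite_of_not_isOfFinAddOrder (hξ : IsHeapHom opC groupHeapOp ξ) {p q : C}
    (hpq : ¬IsOfFinAddOrder (-ξ p + ξ q)) : Infinite C := by
  have orbit_injective : Function.Injective fun n : ℕ => ξ ((fun x => opC x p q)^[n] p) := by
    simp only [hξ.map_iterate_translation]
    exact (add_right_injective (ξ p)).comp (injective_nsmul_iff_not_isOfFinAddOrder.mpr hpq)
  exact Infinite.of_injective _ (Function.Injective.of_comp (f := ξ) orbit_injective)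

end AddGroup

theorem not_isOfFinAddOrder_ulift_up_one : ¬IsOfFinAddOrder (ULift.up.{u} (1 : ℤ)) := fun h =>
  not_isOfFinAddOrder_of_isAddTorsionFree one_ne_zero
    (AddEquiv.ulift.toAddMonoidHom.isOfFinAddOrder h)

theorem coproduct_of_nonempty_abelian_heaps_infinite_general {A B C : Type*}
    [Nonempty A] [Nonempty B] (opA : A → A → A → A) (opB : B → B → B → B) (opC : C → C → C → C)
    (ιA : A → C) (ιB : B → C)
    (exists_desc : ∀ (H : Type u) (opH : H → H → H → H), IsAbelianHeap opH →
      ∀ (φ : A → H) (ψ : B → H), IsHeapHom opA opH φ → IsHeapHom opB opH ψ →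
        ∃ ξ : C → H, IsHeapHom opC opH ξ ∧ (∀ a, ξ (ιA a) = φ a) ∧ ∀ b, ξ (ιB b) = ψ b) :
    Infinite C := by
  obtain ⟨a⟩ := ‹Nonempty A›
  obtain ⟨b⟩ := ‹Nonempty B›
  obtain ⟨ξ, hξ, hξA, hξB⟩ := exists_desc (ULift ℤ) groupHeapOp (isAbelianHeap_groupHeapOp _)
    (fun _ => 0) (fun _ => ⟨1⟩) (isHeapHom_const opA (sub_add_cancel _ _))
    (isHeapHom_const opB (sub_add_cancel _ _))
  apply hξ.infinite_of_not_isOfFinAddOrder (p := ιA a) (q := ιB b)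
  rw [hξA, hξB, neg_zero, zero_add]
  exact not_isOfFinAddOrder_ulift_up_one

/-- If `A` and `B` are nonempty Abelian heaps and
`(C, ι_A, ι_B)` is a coproduct of `A` and `B` in the category of Abelian heaps,
then the underlying set of `C` is infinite. -/
theorem coproduct_of_nonempty_abelian_heaps_infinite {A B C : Type}
    (opA : A → A → A → A) (hA : IsAbelianHeap opA)
    (opB : B → B → B → B) (hB : IsAbelianHeap opB)
    (hneA : Nonempty A) (hneB : Nonempty B)
    (opC : C → C → C → C) (hC : IsAbelianHeap opC) (ιA : A → C) (ιB : B → C)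
    (hιA : ∀ a b c : A, ιA (opA a b c) = opC (ιA a) (ιA b) (ιA c))
    (hιB : ∀ a b c : B, ιB (opB a b c) = opC (ιB a) (ιB b) (ιB c))
    (huniv : ∀ (H : Type) (opH : H → H → H → H), IsAbelianHeap opH →
      ∀ (φ : A → H) (ψ : B → H),
        (∀ a b c : A, φ (opA a b c) = opH (φ a) (φ b) (φ c)) →
        (∀ a b c : B, ψ (opB a b c) = opH (ψ a) (ψ b) (ψ c)) →
        ∃! ξ : C → H,
          (∀ x y z : C, ξ (opC x y z) = opH (ξ x) (ξ y) (ξ z)) ∧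
          (∀ a : A, ξ (ιA a) = φ a) ∧ (∀ b : B, ξ (ιB b) = ψ b)) :
    Infinite C :=
  coproduct_of_nonempty_abelian_heaps_infinite_general opA opB opC ιA ιB
    fun H opH hH φ ψ hφ hψ => (huniv H opH hH φ ψ hφ hψ).exists
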